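/- arXiv:1901.01913 — 4 statements merged into one kernel-verified Lean document; each statement's English description precedes it below -/
import Mathlib

section
/- Let a0 ∈ ℝ^k with ‖a0‖₂ = 1, let 0 < λ < 1, let τ ∈ {0,…,m−1} and ε ∈ {−1,+1}. Set u = ι* s_{−τ}[ι a0] ∈ ℝ^k and η = ‖u‖₂, and assume η > λ. Let ā = ε u / η, let σ ∈ {−1,0,1}^m be the vector with σ_τ = ε and all other entries 0, let I = {τ}, and define M_σ = −ι* Č_{a0} P_I (Č_{a0})* ι = −u uᵀ, b_σ = λ ι* Č_{a0} P_I σ = λ ε u, and γ = −(āᵀ M_σ ā + b_σᵀ ā). Then: (i) the Riemannian gradient of the quadratic piece vanishes at ā, i.e. (Id − ā āᵀ)(M_σ ā + b_σ) = 0; (ii) γ = η² − λη > 0; and (iii) the Riemannian Hessian satisfies (Id − ā āᵀ)(M_σ + γ Id)(Id − ā āᵀ) = (η² − λη)(Id − ā āᵀ), which is positive semidefinite. -/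
open scoped BigOperators Matrix

attribute [local instance 10] Classical.propDecidable

noncomputable section

/-- The index `t mod m` as an element of `Fin m`. -/
def idx (m : ℕ) [NeZero m] (t : ℤ) : Fin m :=
  ⟨(t % (m : ℤ)).toNat, by
    have hm : 0 < m := Nat.pos_of_ne_zero (NeZero.ne m)
    have hm' : (0 : ℤ) < (m : ℤ) := by exact_mod_cast hm
    have h1 : 0 ≤ t % (m : ℤ) := Int.emod_nonneg t (ne_of_gt hm')
    have h2 : t % (m : ℤ) < (m : ℤ) := Int.emod_lt_of_pos t hm'
    omega⟩

/-- Cyclic shift: `(cshift τ v) i = v ((i - τ) mod m)`. -/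
def cshift {m : ℕ} [NeZero m] (τ : ℤ) (v : Fin m → ℝ) : Fin m → ℝ :=
  fun i => v (idx m ((i : ℤ) - τ))

/-- Zero padding `ι : ℝ^k → ℝ^m`. -/
def pad (k m : ℕ) (a : Fin k → ℝ) : Fin m → ℝ :=
  fun i => if h : (i : ℕ) < k then a ⟨i, h⟩ else 0

/-- Restriction to the first `k` coordinates, `ι* : ℝ^m → ℝ^k`. -/
def unpad {k m : ℕ} (h : k ≤ m) (v : Fin m → ℝ) : Fin k → ℝ :=
  fun j => v (Fin.castLE h j)

/-- Circulant matrix `C_w` whose `j`-th column is `s_j[w]`. -/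
def circ {m : ℕ} [NeZero m] (w : Fin m → ℝ) : Matrix (Fin m) (Fin m) ℝ :=
  Matrix.of fun i j => cshift (j : ℤ) w i

/-- Reversed circulant matrix `Č_{a0}` whose `j`-th column is `s_{-j}[ι a0]`. -/
def rcirc (k m : ℕ) [NeZero m] (a0 : Fin k → ℝ) : Matrix (Fin m) (Fin m) ℝ :=
  Matrix.of fun i j => cshift (-(j : ℤ)) (pad k m a0) i

/-- Circular convolution `w ⊛ x = C_w x`. -/
def conv {m : ℕ} [NeZero m] (w x : Fin m → ℝ) : Fin m → ℝ := (circ w).mulVec x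

def dotp {α : Type*} [Fintype α] (u v : α → ℝ) : ℝ := ∑ i, u i * v i

def l2sq {α : Type*} [Fintype α] (v : α → ℝ) : ℝ := ∑ i, v i ^ 2

def l2norm {α : Type*} [Fintype α] (v : α → ℝ) : ℝ := Real.sqrt (l2sq v)

def l1norm {α : Type*} [Fintype α] (v : α → ℝ) : ℝ := ∑ i, |v i|

/-- Scalar soft-thresholding. -/
def soft (lam t : ℝ) : ℝ := Real.sign t * max (|t| - lam) 0

/-- Entrywise soft-thresholding `S_λ`. -/
def softvec {m : ℕ} (lam : ℝ) (u : Fin m → ℝ) : Fin m → ℝ := fun i => soft lam (u i)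

/-- The shift truncation `ι* s_{-τ}[ι a0] ∈ ℝ^k`. -/
def shiftTrunc {k m : ℕ} [NeZero m] (h : k ≤ m) (a0 : Fin k → ℝ) (τ : Fin m) : Fin k → ℝ :=
  unpad h (cshift (-(τ : ℤ)) (pad k m a0))

/-- The inner objective of the simplified marginal problem. -/
def phiHatInner (k m : ℕ) [NeZero m] (lam : ℝ) (a0 a : Fin k → ℝ) (x : Fin m → ℝ) : ℝ :=
  l2sq (pad k m a0) / 2 + l2sq x / 2 - dotp (conv (pad k m a) x) (pad k m a0) + lam * l1norm x

/-- The simplified marginal objective `φ̂`. -/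
def phiHat (k m : ℕ) [NeZero m] (lam : ℝ) (a0 a : Fin k → ℝ) : ℝ :=
  sInf (Set.range (phiHatInner k m lam a0 a))

/-- Zero-padding `ι` as an `m × k` matrix. -/
def padM (k m : ℕ) : Matrix (Fin m) (Fin k) ℝ :=
  Matrix.of fun i j => if (i : ℕ) = (j : ℕ) then 1 else 0

/-- The diagonal 0/1 projection matrix `P_I`. -/
def projM {m : ℕ} (I : Set (Fin m)) : Matrix (Fin m) (Fin m) ℝ :=
  Matrix.of fun i j => if i = j ∧ i ∈ I then 1 else 0

/-- The `ℓ² → ℓ²` operator norm of a matrix. -/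
def opNorm {α β : Type*} [Fintype α] [Fintype β] (A : Matrix α β ℝ) : ℝ :=
  sSup {c | ∃ v : β → ℝ, l2norm v = 1 ∧ c = l2norm (A.mulVec v)}

/-- The `ℓ² → ℓ∞` operator norm of a matrix. -/
def l2linfNorm {α β : Type*} [Fintype α] [Fintype β] (A : Matrix α β ℝ) : ℝ :=
  sSup {c | ∃ v : β → ℝ, l2norm v = 1 ∧ c = sSup {d | ∃ i, d = |A.mulVec v i|}}

/-- The smallest eigenvalue of a symmetric matrix, via the Rayleigh quotient. -/
def lamMin {n : ℕ} (A : Matrix (Fin n) (Fin n) ℝ) : ℝ :=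
  sInf {c | ∃ v : Fin n → ℝ, l2sq v = 1 ∧ c = dotp v (A.mulVec v)}

/-- `‖v‖_p^p = ∑ |v i|^p` for a real exponent `p`. -/
def lpPow {α : Type*} [Fintype α] (p : ℝ) (v : α → ℝ) : ℝ := ∑ i, |v i| ^ p

/-- The `ℓ^p` norm with real exponent `p`. -/
def lpNorm {α : Type*} [Fintype α] (p : ℝ) (v : α → ℝ) : ℝ := (lpPow p v) ^ (1 / p)

/-- The continuous linear functional `v ↦ ⟨g, v⟩` on `ℝ^n`. -/
def dotCLM {n : ℕ} (g : Fin n → ℝ) : (Fin n → ℝ) →L[ℝ] ℝ :=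
  LinearMap.toContinuousLinearMap
    { toFun := fun v => dotp g v
      map_add' := fun x y => by
        simp [dotp, mul_add, Finset.sum_add_distrib]
      map_smul' := fun c x => by
        simp only [dotp, Pi.smul_apply, smul_eq_mul, RingHom.id_apply, Finset.mul_sum]
        exact Finset.sum_congr rfl fun i _ => by ring }

/-! If `u` is the `τ`-th column of `A = ι* Č`, then `A P_{τ} Aᵀ = u uᵀ`. For the unit vector
`ā = ε u / η` this makes the linear term a multiple of `ā` and the quadratic term a multiple of
`ā āᵀ`, so that projecting along `ā` annihilates both, and only the curvature `γ Id` of the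
sphere survives in the Hessian. -/

section RankOne

variable {n R : Type*} [Fintype n] [CommSemiring R] {a : n → R}

theorem smul_vecMulVec_self_mulVec_self (ha : a ⬝ᵥ a = 1) (c : R) :
    (c • Matrix.vecMulVec a a) *ᵥ a = c • a := by
  simp [Matrix.smul_mulVec, Matrix.vecMulVec_mulVec, ha]

theorem dotProduct_smul_vecMulVec_add_smul (ha : a ⬝ᵥ a = 1) (c d : R) :
    a ⬝ᵥ (c • Matrix.vecMulVec a a) *ᵥ a + (d • a) ⬝ᵥ a = c + d := by
  simp [smul_vecMulVec_self_mulVec_self ha, ha]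

end RankOne

section TangentProj

variable {n R : Type*} [DecidableEq n] [CommRing R]

/-- The orthogonal projection onto the tangent space at `a` of the unit sphere. The formula
is meant for unit vectors, `a ⬝ᵥ a = 1`. -/
def tangentProj (a : n → R) : Matrix n n R := 1 - Matrix.vecMulVec a a

theorem isHermitian_tangentProj [StarRing R] [TrivialStar R] (a : n → R) :
    (tangentProj a).IsHermitian := by
  simp [tangentProj, Matrix.IsHermitian]

variable [Fintype n] {a : n → R}

theorem tangentProj_mulVec_self (ha : a ⬝ᵥ a = 1) : tangentProj a *ᵥ a = 0 := by
  simp [tangentProj, Matrix.sub_mulVec, Matrix.vecMulVec_mulVec, ha]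

theorem tangentProj_mul_vecMulVec_self (ha : a ⬝ᵥ a = 1) (v : n → R) :
    tangentProj a * Matrix.vecMulVec a v = 0 := by
  rw [Matrix.mul_vecMulVec, tangentProj_mulVec_self ha, Matrix.zero_vecMulVec]

theorem isIdempotentElem_tangentProj (ha : a ⬝ᵥ a = 1) : IsIdempotentElem (tangentProj a) := by
  calc tangentProj a * (1 - Matrix.vecMulVec a a)
      = tangentProj a - tangentProj a * Matrix.vecMulVec a a := mul_one_sub _ _
    _ = tangentProj a := by rw [tangentProj_mul_vecMulVec_self ha, sub_zero]

theorem posSemidef_tangentProj [PartialOrder R] [StarRing R] [StarOrderedRing R] [TrivialStar R]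
    (ha : a ⬝ᵥ a = 1) : (tangentProj a).PosSemidef := by
  have h := Matrix.posSemidef_conjTranspose_mul_self (tangentProj a)
  rwa [(isHermitian_tangentProj a).eq, (isIdempotentElem_tangentProj ha).eq] at h

theorem tangentProj_mulVec_smul_vecMulVec_add_smul (ha : a ⬝ᵥ a = 1) (c d : R) :
    tangentProj a *ᵥ ((c • Matrix.vecMulVec a a) *ᵥ a + d • a) = 0 := by
  rw [smul_vecMulVec_self_mulVec_self ha, ← add_smul, Matrix.mulVec_smul,
    tangentProj_mulVec_self ha, smul_zero]

theorem tangentProj_mul_smul_vecMulVec_add_smul_mul_tangentProj (ha : a ⬝ᵥ a = 1) (c γ : R) :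
    tangentProj a * (c • Matrix.vecMulVec a a + γ • 1) * tangentProj a = γ • tangentProj a := by
  rw [mul_add, mul_smul_comm, tangentProj_mul_vecMulVec_self ha, smul_zero, zero_add,
    mul_smul_comm, mul_one, smul_mul_assoc, (isIdempotentElem_tangentProj ha).eq]

end TangentProj

section SignedNormalize

variable {n : Type*} [Fintype n] {u : n → ℝ} {ε : ℝ}

theorem l2norm_sq_eq_dotProduct_self (v : n → ℝ) : l2norm v ^ 2 = v ⬝ᵥ v := by
  rw [l2norm, l2sq, Real.sq_sqrt (Finset.sum_nonneg fun i _ => sq_nonneg (v i))]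
  simp only [dotProduct, sq]

/-- The unit vector `ε u / ‖u‖₂` along `u ≠ 0` with sign `ε = ±1`. For `u = 0` it is the zero
vector. -/
def signedNormalize (ε : ℝ) (u : n → ℝ) : n → ℝ := fun r => ε * u r / l2norm u

theorem smul_signedNormalize (hε : ε ^ 2 = 1) (hu : l2norm u ≠ 0) :
    (ε * l2norm u) • signedNormalize ε u = u := by
  ext r
  simp only [signedNormalize, Pi.smul_apply, smul_eq_mul]
  field_simp
  rw [hε, one_mul]

theorem smul_eq_smul_signedNormalize (hε : ε ^ 2 = 1) (hu : l2norm u ≠ 0) :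
    ε • u = l2norm u • signedNormalize ε u := by
  conv_lhs => rw [← smul_signedNormalize hε hu]
  rw [smul_smul, ← mul_assoc, ← sq, hε, one_mul]

theorem vecMulVec_self_eq_smul_signedNormalize (hε : ε ^ 2 = 1) (hu : l2norm u ≠ 0) :
    Matrix.vecMulVec u u =
      l2norm u ^ 2 • Matrix.vecMulVec (signedNormalize ε u) (signedNormalize ε u) := by
  conv_lhs => rw [← smul_signedNormalize hε hu]
  rw [Matrix.smul_vecMulVec, Matrix.vecMulVec_smul, smul_smul, ← sq, mul_pow, hε, one_mul]

theorem signedNormalize_dotProduct_self (hε : ε ^ 2 = 1) (hu : l2norm u ≠ 0) :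
    signedNormalize ε u ⬝ᵥ signedNormalize ε u = 1 := by
  refine mul_left_cancel₀ (pow_ne_zero 2 hu) ?_
  calc l2norm u ^ 2 * (signedNormalize ε u ⬝ᵥ signedNormalize ε u)
      = (l2norm u • signedNormalize ε u) ⬝ᵥ (l2norm u • signedNormalize ε u) := by
        rw [smul_dotProduct, dotProduct_smul, smul_smul, ← sq, smul_eq_mul]
    _ = ε ^ 2 * (u ⬝ᵥ u) := by
        rw [← smul_eq_smul_signedNormalize hε hu, smul_dotProduct, dotProduct_smul, smul_smul,
          ← sq, smul_eq_mul]
    _ = l2norm u ^ 2 * 1 := by rw [hε, one_mul, mul_one, l2norm_sq_eq_dotProduct_self]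

end SignedNormalize

section SingletonSupport

variable {n ι R : Type*} [Fintype ι] [DecidableEq ι]

theorem mul_single_one_eq_vecMulVec [Semiring R] (A : Matrix n ι R) (τ : ι) :
    A * Matrix.single τ τ (1 : R) = Matrix.vecMulVec (A.col τ) (Pi.single τ 1) := by
  rw [Matrix.single_eq_single_vecMulVec_single, Matrix.mul_vecMulVec, Matrix.mulVec_single_one]

theorem mul_single_one_mul_transpose [Semiring R] (A : Matrix n ι R) (τ : ι) :
    A * Matrix.single τ τ (1 : R) * Aᵀ = Matrix.vecMulVec (A.col τ) (A.col τ) := by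
  rw [mul_single_one_eq_vecMulVec, Matrix.vecMulVec_mul, Matrix.single_one_vecMul,
    Matrix.row_transpose]

theorem mul_single_one_mulVec [CommSemiring R] (A : Matrix n ι R) (τ : ι) (x : ι → R) :
    (A * Matrix.single τ τ (1 : R)) *ᵥ x = x τ • A.col τ := by
  rw [mul_single_one_eq_vecMulVec, Matrix.vecMulVec_mulVec, single_one_dotProduct, op_smul_eq_smul]

end SingletonSupport

theorem projM_singleton {m : ℕ} (τ : Fin m) : projM {τ} = Matrix.single τ τ 1 := by
  ext i j
  simp only [projM, Matrix.of_apply, Matrix.single_apply, Set.mem_singleton_iff]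
  grind

theorem transpose_padM_eq_submatrix {k m : ℕ} (hkm : k ≤ m) :
    (padM k m)ᵀ = (1 : Matrix (Fin m) (Fin m) ℝ).submatrix (Fin.castLE hkm) id := by
  ext r i
  simp [padM, Matrix.one_apply, Fin.ext_iff, eq_comm]

theorem col_padM_transpose_mul_rcirc {k m : ℕ} [NeZero m] (hkm : k ≤ m) (a0 : Fin k → ℝ)
    (τ : Fin m) : ((padM k m)ᵀ * rcirc k m a0).col τ = shiftTrunc hkm a0 τ := by
  rw [transpose_padM_eq_submatrix hkm, ← Equiv.coe_refl, Matrix.one_submatrix_mul]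
  rfl

theorem stmt_14_general {n ι : Type*} [Fintype n] [DecidableEq n] [Fintype ι] [DecidableEq ι]
    (A : Matrix n ι ℝ) {lam : ℝ} (h0 : 0 < lam) (τ : ι) {ε : ℝ} (hε : ε = 1 ∨ ε = -1)
    (hη : lam < l2norm (A.col τ)) :
    let u : n → ℝ := A.col τ
    let η : ℝ := l2norm u
    let abar : n → ℝ := fun r => ε * u r / η
    let σ : ι → ℝ := fun i => if i = τ then ε else 0
    let M : Matrix n n ℝ := -(A * Matrix.single τ τ (1 : ℝ) * Aᵀ)
    let b : n → ℝ := lam • (A * Matrix.single τ τ (1 : ℝ)).mulVec σ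
    let γ : ℝ := -(dotp abar (M.mulVec abar) + dotp b abar)
    M = -Matrix.vecMulVec u u ∧
    b = (lam * ε) • u ∧
    (1 - Matrix.vecMulVec abar abar).mulVec (M.mulVec abar + b) = 0 ∧
    γ = η ^ 2 - lam * η ∧ 0 < γ ∧
    (1 - Matrix.vecMulVec abar abar) * (M + γ • (1 : Matrix n n ℝ)) *
        (1 - Matrix.vecMulVec abar abar)
      = (η ^ 2 - lam * η) • (1 - Matrix.vecMulVec abar abar) ∧
    ((η ^ 2 - lam * η) • (1 - Matrix.vecMulVec abar abar)).PosSemidef := by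
  intro u η abar σ M b γ
  have hη0 : 0 < η := h0.trans hη
  have hε2 : ε ^ 2 = 1 := sq_eq_one_iff.mpr hε
  have ha : abar ⬝ᵥ abar = 1 := signedNormalize_dotProduct_self hε2 hη0.ne'
  have hMu : M = -Matrix.vecMulVec u u := congrArg Neg.neg (mul_single_one_mul_transpose A τ)
  have hbu : b = (lam * ε) • u := by
    simp only [b, σ, mul_single_one_mulVec, if_true, smul_smul, u]
  have hM : M = (-η ^ 2) • Matrix.vecMulVec abar abar := by
    rw [hMu, vecMulVec_self_eq_smul_signedNormalize hε2 hη0.ne', neg_smul]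
    rfl
  have hb : b = (lam * η) • abar := by
    rw [hbu, mul_smul, smul_eq_smul_signedNormalize hε2 hη0.ne', mul_smul]
    rfl
  have hγ : γ = η ^ 2 - lam * η := by
    have h : dotp abar (M *ᵥ abar) + dotp b abar = -η ^ 2 + lam * η := by
      rw [hM, hb]
      exact dotProduct_smul_vecMulVec_add_smul ha _ _
    linear_combination -h
  have hγ0 : 0 < η ^ 2 - lam * η := by
    rw [sq, ← sub_mul]
    exact mul_pos (sub_pos.mpr hη) hη0
  refine ⟨hMu, hbu, ?_, hγ, hγ ▸ hγ0, ?_, (posSemidef_tangentProj ha).smul hγ0.le⟩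
  · rw [hM, hb]
    exact tangentProj_mulVec_smul_vecMulVec_add_smul ha _ _
  · rw [hM, hγ]
    exact tangentProj_mul_smul_vecMulVec_add_smul_mul_tangentProj ha _ _

/-- at a normalized signed shift truncation with singleton support, the
Riemannian gradient of the quadratic piece vanishes, `γ = η² − λη > 0`, and the
Riemannian Hessian equals `(η² − λη)(Id − ā āᵀ)`, which is positive semidefinite. -/
theorem stmt_14 {k m : ℕ} [NeZero m] (hkm : k ≤ m) (lam : ℝ) (h0 : 0 < lam)
    (h1 : lam < 1) (a0 : Fin k → ℝ) (ha0 : l2norm a0 = 1)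
    (τ : Fin m) (ε : ℝ) (hε : ε = 1 ∨ ε = -1)
    (hη : lam < l2norm (shiftTrunc hkm a0 τ)) :
    let u : Fin k → ℝ := shiftTrunc hkm a0 τ
    let η : ℝ := l2norm u
    let abar : Fin k → ℝ := fun r => ε * u r / η
    let σ : Fin m → ℝ := fun i => if i = τ then ε else 0
    let I : Set (Fin m) := {τ}
    let M : Matrix (Fin k) (Fin k) ℝ :=
      -((padM k m)ᵀ * rcirc k m a0 * projM I * (rcirc k m a0)ᵀ * padM k m)
    let b : Fin k → ℝ := lam • ((padM k m)ᵀ * rcirc k m a0 * projM I).mulVec σ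
    let γ : ℝ := -(dotp abar (M.mulVec abar) + dotp b abar)
    M = -Matrix.vecMulVec u u ∧
    b = (lam * ε) • u ∧
    (1 - Matrix.vecMulVec abar abar).mulVec (M.mulVec abar + b) = 0 ∧
    γ = η ^ 2 - lam * η ∧ 0 < γ ∧
    (1 - Matrix.vecMulVec abar abar) * (M + γ • (1 : Matrix (Fin k) (Fin k) ℝ)) *
        (1 - Matrix.vecMulVec abar abar)
      = (η ^ 2 - lam * η) • (1 - Matrix.vecMulVec abar abar) ∧
    ((η ^ 2 - lam * η) • (1 - Matrix.vecMulVec abar abar)).PosSemidef := by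
  simpa only [Matrix.transpose_mul, Matrix.transpose_transpose, ← Matrix.mul_assoc,
    projM_singleton, col_padM_transpose_mul_rcirc hkm] using
    stmt_14_general ((padM k m)ᵀ * rcirc k m a0) h0 τ hε
      (by rwa [col_padM_transpose_mul_rcirc hkm])

end
end

section
/- Let 0 < λ < 1 and let a0, a ∈ ℝ^k with ‖a0‖₂ = ‖a‖₂ = 1 and ⟨a, a0⟩ ≥ λ. Suppose that for every τ ∈ {1,…,m−1}, |⟨ι a0, s_τ[ι a0]⟩| < λ² − (2 + 1/λ²)√(1 − λ²). Then for every τ ∈ {1,…,m−1}, |⟨ι a, s_τ[ι a]⟩| < 1 − √(1 − λ²)/λ². -/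
open scoped BigOperators Matrix

attribute [local instance 10] Classical.propDecidable

noncomputable section

/-!
Write `v = c u + r` with `c = ⟪u, v⟫` and `r ⊥ u`. For unit vectors, `|c| ≤ 1` and `|c| ≥ λ` gives
`‖r‖² ≤ 1 - λ²`, so expanding `⟪v, T v⟫` for a contraction `T`, here the cyclic shift, bounds it by
`|⟪u, T u⟫| + 2 √(1 - λ²) + (1 - λ²)`. The separation threshold is chosen so that the error terms
cancel, leaving `1 - √(1 - λ²) / λ²`.
-/

open scoped InnerProductSpace

section InnerProduct

variable {𝕜 E : Type*} [RCLike 𝕜] [NormedAddCommGroup E] [InnerProductSpace 𝕜 E]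

theorem norm_sub_inner_smul_sq {u : E} (hu : ‖u‖ = 1) (v : E) :
    ‖v - ⟪u, v⟫_𝕜 • u‖ ^ 2 = ‖v‖ ^ 2 - ‖⟪u, v⟫_𝕜‖ ^ 2 := by
  have cross : RCLike.re ⟪v, ⟪u, v⟫_𝕜 • u⟫_𝕜 = ‖⟪u, v⟫_𝕜‖ ^ 2 := by
    rw [inner_smul_right, inner_mul_symm_re_eq_norm, norm_mul, norm_inner_symm v u, sq]
  rw [norm_sub_sq (𝕜 := 𝕜), cross, norm_smul, hu]
  ring

theorem norm_inner_map_le (T : E →L[𝕜] E) (x y : E) : ‖⟪x, T y⟫_𝕜‖ ≤ ‖T‖ * (‖x‖ * ‖y‖) :=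
  calc ‖⟪x, T y⟫_𝕜‖ ≤ ‖x‖ * ‖T y‖ := norm_inner_le_norm x (T y)
    _ ≤ ‖x‖ * (‖T‖ * ‖y‖) := by gcongr; exact T.le_opNorm y
    _ = ‖T‖ * (‖x‖ * ‖y‖) := by ring

theorem norm_inner_map_self_add_le (T : E →L[𝕜] E) (x y : E) :
    ‖⟪x + y, T (x + y)⟫_𝕜‖ ≤ ‖⟪x, T x⟫_𝕜‖ + ‖T‖ * (2 * ‖x‖ * ‖y‖ + ‖y‖ ^ 2) :=
  calc ‖⟪x + y, T (x + y)⟫_𝕜‖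
      = ‖⟪x, T x⟫_𝕜 + ⟪x, T y⟫_𝕜 + ⟪y, T x⟫_𝕜 + ⟪y, T y⟫_𝕜‖ := by
        rw [map_add, inner_add_left, inner_add_right, inner_add_right, ← add_assoc]
    _ ≤ ‖⟪x, T x⟫_𝕜‖ + ‖⟪x, T y⟫_𝕜‖ + ‖⟪y, T x⟫_𝕜‖ + ‖⟪y, T y⟫_𝕜‖ := norm_add₄_le
    _ ≤ ‖⟪x, T x⟫_𝕜‖ + ‖T‖ * (‖x‖ * ‖y‖) + ‖T‖ * (‖y‖ * ‖x‖) + ‖T‖ * (‖y‖ * ‖y‖) := by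
        gcongr <;> exact norm_inner_map_le T _ _
    _ = ‖⟪x, T x⟫_𝕜‖ + ‖T‖ * (2 * ‖x‖ * ‖y‖ + ‖y‖ ^ 2) := by ring

theorem norm_inner_map_self_le_of_le_norm_inner (T : E →L[𝕜] E) {u v : E} (hu : ‖u‖ = 1)
    (hv : ‖v‖ ≤ 1) {lam : ℝ} (h0 : 0 ≤ lam) (hcorr : lam ≤ ‖⟪u, v⟫_𝕜‖) :
    ‖⟪v, T v⟫_𝕜‖ ≤ ‖⟪u, T u⟫_𝕜‖ + ‖T‖ * (2 * √(1 - lam ^ 2) + (1 - lam ^ 2)) := by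
  set c := ⟪u, v⟫_𝕜
  set r := v - c • u
  have hc : ‖c‖ ≤ 1 := (norm_inner_le_norm u v).trans (by rwa [hu, one_mul])
  have hr_sq : ‖r‖ ^ 2 ≤ 1 - lam ^ 2 := by
    rw [norm_sub_inner_smul_sq hu]
    gcongr
    exact pow_le_one₀ (norm_nonneg v) hv
  have hr : ‖r‖ ≤ √(1 - lam ^ 2) := Real.le_sqrt_of_sq_le hr_sq
  have hcu : ‖c • u‖ ≤ 1 := by rwa [norm_smul, hu, mul_one]
  have main_term : ‖⟪c • u, T (c • u)⟫_𝕜‖ ≤ ‖⟪u, T u⟫_𝕜‖ := by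
    simp only [map_smul, inner_smul_left, inner_smul_right, norm_mul, RCLike.norm_conj,
      ← mul_assoc]
    exact mul_le_of_le_one_left (norm_nonneg _) (mul_le_one₀ hc (norm_nonneg c) hc)
  calc ‖⟪v, T v⟫_𝕜‖ = ‖⟪c • u + r, T (c • u + r)⟫_𝕜‖ := by rw [add_sub_cancel]
    _ ≤ ‖⟪c • u, T (c • u)⟫_𝕜‖ + ‖T‖ * (2 * ‖c • u‖ * ‖r‖ + ‖r‖ ^ 2) :=
        norm_inner_map_self_add_le T _ _
    _ ≤ ‖⟪u, T u⟫_𝕜‖ + ‖T‖ * (2 * 1 * √(1 - lam ^ 2) + (1 - lam ^ 2)) := by gcongr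
    _ = ‖⟪u, T u⟫_𝕜‖ + ‖T‖ * (2 * √(1 - lam ^ 2) + (1 - lam ^ 2)) := by rw [mul_one]

theorem stmt_15_general {T : E →L[𝕜] E} (hT : ‖T‖ ≤ 1) {u v : E} (hu : ‖u‖ = 1)
    (hv : ‖v‖ ≤ 1) {lam : ℝ} (h0 : 0 < lam) (hcorr : lam ≤ ‖⟪v, u⟫_𝕜‖)
    (hsep : ‖⟪u, T u⟫_𝕜‖ < lam ^ 2 - (2 + 1 / lam ^ 2) * √(1 - lam ^ 2)) :
    ‖⟪v, T v⟫_𝕜‖ < 1 - √(1 - lam ^ 2) / lam ^ 2 := by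
  have hlam : lam ≤ 1 :=
    hcorr.trans ((norm_inner_le_norm v u).trans (by rwa [hu, mul_one]))
  have hlam_sq : 0 ≤ 1 - lam ^ 2 := sub_nonneg.2 (pow_le_one₀ h0.le hlam)
  calc ‖⟪v, T v⟫_𝕜‖
      ≤ ‖⟪u, T u⟫_𝕜‖ + ‖T‖ * (2 * √(1 - lam ^ 2) + (1 - lam ^ 2)) :=
        norm_inner_map_self_le_of_le_norm_inner T hu hv h0.le (by rwa [norm_inner_symm])
    _ ≤ ‖⟪u, T u⟫_𝕜‖ + (2 * √(1 - lam ^ 2) + (1 - lam ^ 2)) := by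
        gcongr
        exact mul_le_of_le_one_left (by positivity) hT
    _ < lam ^ 2 - (2 + 1 / lam ^ 2) * √(1 - lam ^ 2) + (2 * √(1 - lam ^ 2) + (1 - lam ^ 2)) := by
        gcongr
    _ = 1 - √(1 - lam ^ 2) / lam ^ 2 := by ring

end InnerProduct

theorem dotp_eq_inner {α : Type*} [Fintype α] (u v : α → ℝ) :
    dotp u v = ⟪WithLp.toLp 2 u, WithLp.toLp 2 v⟫_ℝ := by
  simp [dotp, PiLp.inner_apply, mul_comm]

theorem dotp_pad {k m : ℕ} (hkm : k ≤ m) (a b : Fin k → ℝ) :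
    dotp (pad k m a) (pad k m b) = dotp a b := by
  obtain ⟨n, rfl⟩ := Nat.exists_eq_add_of_le hkm
  simp [dotp, pad, Fin.sum_univ_add]

theorem norm_toLp_pad {k m : ℕ} (hkm : k ≤ m) (a : Fin k → ℝ) :
    ‖WithLp.toLp 2 (pad k m a)‖ = l2norm a := by
  rw [norm_eq_sqrt_real_inner, ← dotp_eq_inner, dotp_pad hkm]
  simp only [l2norm, l2sq, dotp, sq]

section Shift

variable {m : ℕ} [NeZero m]

theorem val_idx (t : ℤ) : ((idx m t : ℕ) : ℤ) = t % m :=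
  Int.toNat_of_nonneg (Int.emod_nonneg t (Nat.cast_ne_zero.2 (NeZero.ne m)))

theorem idx_val_sub (i : Fin m) (t : ℤ) : idx m (i - t) = i - idx m t := by
  have val_sub : ((i - idx m t : Fin m) : ℤ) = (m + (i - t % m)) % m := by
    rw [Fin.val_sub, Int.natCast_mod, Nat.cast_add, Nat.cast_sub (idx m t).is_le', val_idx]
    ring_nf
  ext
  zify
  rw [val_idx, val_sub, Int.add_emod_left, Int.sub_emod_emod]

/-- The cyclic shift `s_τ` as a linear isometry of Euclidean space, encoded as the permutation of
coordinates `i ↦ i + τ`. -/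
def cshiftIsometry (τ : ℤ) : EuclideanSpace ℝ (Fin m) ≃ₗᵢ[ℝ] EuclideanSpace ℝ (Fin m) :=
  .piLpCongrLeft 2 ℝ ℝ (Equiv.addRight (idx m τ))

theorem toLp_cshift (τ : ℤ) (v : Fin m → ℝ) :
    WithLp.toLp 2 (cshift τ v) = cshiftIsometry τ (WithLp.toLp 2 v) := by
  ext i
  calc v (idx m (i - τ)) = v (i - idx m τ) := by rw [idx_val_sub]
    _ = v (i + -idx m τ) := by rw [sub_eq_add_neg]

end Shift

/-- if the shifts of `ι a0` are nearly orthogonal and `⟨a, a0⟩ ≥ λ`,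
then the nonzero shift correlations of `ι a` are bounded by `1 − √(1−λ²)/λ²`. -/
theorem stmt_15 {k m : ℕ} [NeZero m] (hkm : k ≤ m) (lam : ℝ) (h0 : 0 < lam)
    (h1 : lam < 1) (a0 a : Fin k → ℝ) (ha0 : l2norm a0 = 1) (ha : l2norm a = 1)
    (hcorr : lam ≤ dotp a a0)
    (hsep : ∀ τ : Fin m, τ ≠ 0 →
      |dotp (pad k m a0) (cshift (τ : ℤ) (pad k m a0))|
        < lam ^ 2 - (2 + 1 / lam ^ 2) * Real.sqrt (1 - lam ^ 2)) :
    ∀ τ : Fin m, τ ≠ 0 →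
      |dotp (pad k m a) (cshift (τ : ℤ) (pad k m a))|
        < 1 - Real.sqrt (1 - lam ^ 2) / lam ^ 2 := by
  rw [← dotp_pad hkm] at hcorr
  simp only [dotp_eq_inner, toLp_cshift] at hcorr hsep ⊢
  exact fun τ hτ =>
    stmt_15_general (cshiftIsometry τ).toLinearIsometry.norm_toContinuousLinearMap_le
      ((norm_toLp_pad hkm a0).trans ha0) ((norm_toLp_pad hkm a).trans ha).le
      h0 (hcorr.trans (Real.le_norm_self _)) (hsep τ hτ)

end
end

section
/- Let x0, x* ∈ ℝ^m with supp(x*) ⊆ supp(x0), and suppose the support of x0 is 2k-separated, i.e. for every pair of distinct indices i ≠ j in supp(x0) the cyclic distance min((i − j) mod m, (j − i) mod m) is at least 2k. Then for all a, a0 ∈ ℝ^k: ι* (C_{x*})ᵀ ( (ι a) ⊛ x* − (ι a0) ⊛ x0 ) = ‖x*‖₂² a − ⟨x*, x0⟩ a0. Consequently, if ‖a‖₂ = 1, then (Id − a aᵀ) ι* (C_{x*})ᵀ ( (ι a) ⊛ x* − (ι a0) ⊛ x0 ) = −⟨x*, x0⟩ (Id − a aᵀ) a0. -/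
open scoped BigOperators Matrix

attribute [local instance 10] Classical.propDecidable

noncomputable section

/-! The `j`-th entry of `C_yᵀ C_w x` is `∑ p l, y p * w (p - l + j) * x l`. If `w` vanishes outside
the first `k` coordinates and `j < k`, the terms with `p ≠ l` drop out as soon as the points of
`supp y` and `supp x` have cyclic distance at least `k`, since then `p - l + j` does not wrap around
and stays at least `k`. What remains is the diagonal `⟨y, x⟩ * w j`. -/

open Function Matrix

theorem transpose_circulant_mulVec_circulant_mulVec_apply {G R : Type*} [Fintype G]
    [AddCommGroup G] [NonUnitalNonAssocSemiring R] (y w x : G → R) (j : G) :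
    ((circulant y)ᵀ *ᵥ (circulant w *ᵥ x)) j = ∑ p, y p * ∑ l, w (p - l + j) * x l := by
  simp only [mulVec, dotProduct, transpose_apply, circulant_apply]
  rw [← Equiv.sum_comp (Equiv.addRight j)]
  simp only [Equiv.coe_addRight, add_sub_cancel_right, add_sub_right_comm]

theorem transpose_circulant_mulVec_circulant_mulVec_apply_of_forall_ne {G R : Type*} [Fintype G]
    [AddCommGroup G] [NonUnitalCommSemiring R] {y w x : G → R} {j : G}
    (hw : ∀ p ∈ support y, ∀ l ∈ support x, p ≠ l → w (p - l + j) = 0) :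
    ((circulant y)ᵀ *ᵥ (circulant w *ᵥ x)) j = (y ⬝ᵥ x) * w j := by
  rw [transpose_circulant_mulVec_circulant_mulVec_apply, dotProduct, Finset.sum_mul]
  refine Finset.sum_congr rfl fun p _ => ?_
  by_cases hp : y p = 0
  · simp only [hp, zero_mul]
  have off_diagonal (l : G) (hl : l ≠ p) : w (p - l + j) * x l = 0 := by
    by_cases hx : x l = 0
    · rw [hx, mul_zero]
    · rw [hw p hp l hx hl.symm, zero_mul]
  rw [Fintype.sum_eq_single p off_diagonal, sub_self, zero_add, mul_assoc, mul_comm (x p)]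

theorem one_sub_vecMulVec_self_mulVec_self {n R : Type*} [Fintype n] [DecidableEq n] [CommRing R]
    {a : n → R} (ha : a ⬝ᵥ a = 1) : (1 - vecMulVec a a) *ᵥ a = 0 := by
  rw [sub_mulVec, one_mulVec, vecMulVec_mulVec, ha, MulOpposite.op_one, one_smul, sub_self]

theorem dotp_eq_dotProduct {α : Type*} [Fintype α] (u v : α → ℝ) : dotp u v = u ⬝ᵥ v := rfl

theorem l2sq_eq_dotProduct_self {α : Type*} [Fintype α] (v : α → ℝ) : l2sq v = v ⬝ᵥ v := by
  simp only [l2sq, dotProduct, sq]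

theorem l2norm_eq_one_iff {α : Type*} [Fintype α] {v : α → ℝ} : l2norm v = 1 ↔ v ⬝ᵥ v = 1 := by
  rw [l2norm, Real.sqrt_eq_one, l2sq_eq_dotProduct_self]

theorem pad_apply_of_le {k m : ℕ} (a : Fin k → ℝ) {i : Fin m} (hi : k ≤ i) : pad k m a i = 0 :=
  dif_neg hi.not_gt

theorem pad_castLE {k m : ℕ} (hkm : k ≤ m) (a : Fin k → ℝ) (j : Fin k) :
    pad k m a (Fin.castLE hkm j) = a j :=
  dif_pos j.isLt

/-- Distinct points of `s` and `t`, sets of residues modulo `m`, have cyclic distance at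
least `d`. For `s = t = supp x` this is the `d`-separation of the support of `x`. -/
def CyclicSeparated {m : ℕ} (d : ℕ) (s t : Set (Fin m)) : Prop :=
  ∀ i ∈ s, ∀ j ∈ t, i ≠ j → d ≤ min ((i - j : Fin m) : ℕ) ((j - i : Fin m) : ℕ)

theorem CyclicSeparated.mono {m d d' : ℕ} {s s' t t' : Set (Fin m)}
    (h : CyclicSeparated d s t) (hd : d' ≤ d) (hs : s' ⊆ s) (ht : t' ⊆ t) :
    CyclicSeparated d' s' t' :=
  fun i hi j hj hij => hd.trans (h i (hs hi) j (ht hj) hij)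

section Cyclic

variable {k m : ℕ} [NeZero m]

theorem idx_val_sub_val (i j : Fin m) : idx m ((i : ℤ) - j) = i - j := by
  have hmod : ((i : ℤ) - j) % m = (i - j : Fin m) := by
    rw [← Int.emod_eq_of_lt (Int.natCast_nonneg _) (Int.ofNat_lt.2 (i - j).isLt),
      Fin.intCast_val_sub_eq_sub_add_ite]
    split_ifs <;> simp
  exact Fin.ext (congrArg Int.toNat hmod)

theorem circ_eq_circulant (w : Fin m → ℝ) : circ w = circulant w := by
  ext i j
  exact congrArg w (idx_val_sub_val i j)

theorem le_val_add_of_le_val_neg {a b : Fin m} (ha : k ≤ a) (hna : k ≤ (-a : Fin m))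
    (hb : b < k) : k ≤ (a + b : Fin m) := by
  have no_wrap : (a : ℕ) + b < m := by
    rw [Fin.val_neg] at hna
    split_ifs at hna <;> omega
  rw [Fin.val_add_eq_of_add_lt no_wrap]
  exact ha.trans (Nat.le_add_right _ _)

theorem CyclicSeparated.pad_sub_add_eq_zero {s t : Set (Fin m)} (h : CyclicSeparated k s t)
    (a : Fin k → ℝ) {p l j : Fin m} (hp : p ∈ s) (hl : l ∈ t) (hpl : p ≠ l) (hj : j < k) :
    pad k m a (p - l + j) = 0 := by
  obtain ⟨hsub, hneg⟩ := le_min_iff.1 (h p hp l hl hpl)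
  rw [← neg_sub p l] at hneg
  exact pad_apply_of_le a (le_val_add_of_le_val_neg hsub hneg hj)

theorem unpad_transpose_circ_mulVec_conv_pad (hkm : k ≤ m) {y x : Fin m → ℝ}
    (h : CyclicSeparated k (support y) (support x)) (a : Fin k → ℝ) :
    unpad hkm ((circ y)ᵀ *ᵥ conv (pad k m a) x) = dotp y x • a := by
  funext j
  rw [unpad, conv, circ_eq_circulant, circ_eq_circulant,
    transpose_circulant_mulVec_circulant_mulVec_apply_of_forall_ne fun p hp l hl hpl =>
      h.pad_sub_add_eq_zero a hp hl hpl j.isLt,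
    pad_castLE, dotp_eq_dotProduct, Pi.smul_apply, smul_eq_mul]

theorem unpad_transpose_circ_mulVec_sub (hkm : k ≤ m) {x0 xstar : Fin m → ℝ}
    (hstar : CyclicSeparated k (support xstar) (support xstar))
    (h0 : CyclicSeparated k (support xstar) (support x0)) (a a0 : Fin k → ℝ) :
    unpad hkm ((circ xstar)ᵀ *ᵥ (conv (pad k m a) xstar - conv (pad k m a0) x0)) =
      l2sq xstar • a - dotp xstar x0 • a0 := by
  rw [l2sq_eq_dotProduct_self, ← dotp_eq_dotProduct,
    ← unpad_transpose_circ_mulVec_conv_pad hkm hstar a,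
    ← unpad_transpose_circ_mulVec_conv_pad hkm h0 a0, mulVec_sub]
  rfl

end Cyclic

theorem stmt_16_general {k m : ℕ} [NeZero m] (hkm : k ≤ m) (x0 xstar : Fin m → ℝ)
    (hsep : CyclicSeparated k (support xstar) (support xstar ∪ support x0)) :
    (∀ a a0 : Fin k → ℝ,
      unpad hkm ((circ xstar)ᵀ *ᵥ (conv (pad k m a) xstar - conv (pad k m a0) x0)) =
        l2sq xstar • a - dotp xstar x0 • a0) ∧
    (∀ a a0 : Fin k → ℝ, l2norm a = 1 →
      (1 - vecMulVec a a) *ᵥ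
          unpad hkm ((circ xstar)ᵀ *ᵥ (conv (pad k m a) xstar - conv (pad k m a0) x0)) =
        (-dotp xstar x0) • ((1 - vecMulVec a a) *ᵥ a0)) := by
  have gradient := unpad_transpose_circ_mulVec_sub hkm
    (hsep.mono le_rfl subset_rfl Set.subset_union_left)
    (hsep.mono le_rfl subset_rfl Set.subset_union_right)
  refine ⟨gradient, fun a a0 ha => ?_⟩
  have project_self := one_sub_vecMulVec_self_mulVec_self (l2norm_eq_one_iff.1 ha)
  rw [gradient, mulVec_sub, mulVec_smul, mulVec_smul, project_self, smul_zero, zero_sub, neg_smul]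

/-- for `2k`-separated supports with `supp(x*) ⊆ supp(x0)`,
`ι* C_{x*}ᵀ ((ι a) ⊛ x* − (ι a0) ⊛ x0) = ‖x*‖₂² a − ⟨x*, x0⟩ a0`, and consequently the
projected gradient is `−⟨x*, x0⟩ (Id − a aᵀ) a0` for unit `a`. -/
theorem stmt_16 {k m : ℕ} [NeZero m] (hkm : k ≤ m) (x0 xstar : Fin m → ℝ)
    (hsupp : {i | xstar i ≠ 0} ⊆ {i | x0 i ≠ 0})
    (hsep : ∀ i j : Fin m, x0 i ≠ 0 → x0 j ≠ 0 → i ≠ j →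
      2 * k ≤ min ((i - j : Fin m) : ℕ) ((j - i : Fin m) : ℕ)) :
    (∀ a a0 : Fin k → ℝ,
      unpad hkm (((circ xstar)ᵀ).mulVec (conv (pad k m a) xstar - conv (pad k m a0) x0))
        = l2sq xstar • a - dotp xstar x0 • a0) ∧
    (∀ a a0 : Fin k → ℝ, l2norm a = 1 →
      (1 - Matrix.vecMulVec a a).mulVec
          (unpad hkm (((circ xstar)ᵀ).mulVec (conv (pad k m a) xstar - conv (pad k m a0) x0)))
        = (-dotp xstar x0) • ((1 - Matrix.vecMulVec a a).mulVec a0)) := by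
  have separated : CyclicSeparated (2 * k) (support x0) (support x0) :=
    fun i hi j hj => hsep i j hi hj
  exact stmt_16_general hkm x0 xstar
    (separated.mono (by omega) hsupp (Set.union_subset hsupp subset_rfl))

end
end

section
/- Let p ≥ 2 be a real number, let c > 0, and let 0 < λ < c^{p−1}. Then the function g : ℝ → ℝ given by g(α) = (1/p)|c − α|^p + λ|α| attains its unique global minimum at α = c − λ^{1/(p−1)}. -/
open scoped BigOperators Matrix

attribute [local instance 10] Classical.propDecidable

noncomputable section

/-!
Young's inequality says that `t ↦ t ^ p / p` lies strictly above its tangent line at `r`, whose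
slope is `r ^ (p - 1)`. Take `λ = r ^ (p - 1)` and a point `a` of the segment from `c` to `b` at
distance `r` from `c`. Then the objective `dist c x ^ p / p + λ * dist x b` is at least an affine
function of `dist c x + dist x b`, which the triangle inequality minimizes at `a`. Equality forces
`dist c x = r` and, if `0 < r`, `dist x b = dist a b`; by strict convexity of the norm only `x = a`
satisfies both.
-/

theorem rpow_div_add_rpow_sub_one_mul_sub_lt {p r u : ℝ} (hp : 1 < p) (hr : 0 ≤ r) (hu : 0 ≤ u)
    (hur : u ≠ r) : r ^ p / p + r ^ (p - 1) * (u - r) < u ^ p / p := by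
  have hp₀ : 0 < p := one_pos.trans hp
  have hpq : p.HolderConjugate (p / (p - 1)) := Real.HolderConjugate.conjExponent hp
  have hslope : 0 ≤ r ^ (p - 1) := Real.rpow_nonneg hr _
  have hdual : (r ^ (p - 1)) ^ (p / (p - 1)) = r ^ p := by
    rw [← Real.rpow_mul hr, mul_div_cancel₀ _ (sub_pos.2 hp).ne']
  have hmul : r ^ (p - 1) * r = r ^ p := by
    rw [← Real.rpow_add_one' hr (by simpa using hp₀.ne'), sub_add_cancel]
  have young : u * r ^ (p - 1) < u ^ p / p + r ^ p / (p / (p - 1)) := by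
    rw [← hdual]
    refine (Real.young_inequality_of_nonneg hu hslope hpq).lt_of_ne fun heq ↦ hur ?_
    rw [Real.young_inequality_eq_iff_of_nonneg hu hslope hpq, hdual] at heq
    exact (Real.rpow_left_inj hu hr hp₀.ne').1 heq
  have hconj : r ^ p / (p / (p - 1)) = r ^ p - r ^ p / p := by
    field_simp
  linarith

theorem wbtw_sub_smul_zero {R M : Type*} [Ring R] [PartialOrder R] [AddCommGroup M] [Module R M]
    (c : M) {t : R} (ht₀ : 0 ≤ t) (ht₁ : t ≤ 1) : Wbtw R c (c - t • c) 0 :=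
  ⟨t, ⟨ht₀, ht₁⟩, by rw [AffineMap.lineMap_apply_module, smul_zero, add_zero, sub_smul, one_smul]⟩

theorem norm_div_norm_smul {E : Type*} [SeminormedAddCommGroup E] [NormedSpace ℝ E] {c : E} {r : ℝ}
    (hr : 0 ≤ r) (hrc : r ≤ ‖c‖) : ‖(r / ‖c‖) • c‖ = r := by
  rw [norm_smul, Real.norm_of_nonneg (by positivity)]
  exact div_mul_cancel_of_imp fun hc ↦ le_antisymm (hrc.trans_eq hc) hr

section StrictConvexSpace

variable {E : Type*} [NormedAddCommGroup E] [NormedSpace ℝ E] [StrictConvexSpace ℝ E]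

section Torsor

variable {P : Type*} [MetricSpace P] [NormedAddTorsor E P] {a b c x : P}

theorem eq_of_wbtw_of_dist_eq_of_dist_eq (h : Wbtw ℝ c a b) (hc : dist c x = dist c a)
    (hb : dist x b = dist a b) : x = a := by
  obtain ⟨t, ⟨ht₀, ht₁⟩, rfl⟩ := h
  apply eq_lineMap_of_dist_eq_mul_of_dist_eq_mul
  · rw [hc, dist_left_lineMap, Real.norm_of_nonneg ht₀]
  · rw [hb, dist_lineMap_right, Real.norm_of_nonneg (sub_nonneg.2 ht₁)]

theorem dist_rpow_div_add_mul_dist_lt_of_wbtw {p : ℝ} (hp : 1 < p) (h : Wbtw ℝ c a b)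
    (hx : x ≠ a) :
    dist c a ^ p / p + dist c a ^ (p - 1) * dist a b <
      dist c x ^ p / p + dist c a ^ (p - 1) * dist x b := by
  have htri : dist a b ≤ dist c x - dist c a + dist x b := by
    linarith [h.dist_add_dist, dist_triangle c x b]
  rcases eq_or_ne (dist c x) (dist c a) with heq | hne
  · have hca : 0 < dist c a := by
      refine dist_pos.2 ?_
      rintro rfl
      exact hx (dist_eq_zero.1 (heq.trans (dist_self c))).symm
    have hlt : dist a b < dist x b :=
      lt_of_le_of_ne (by linarith) fun hab ↦
        hx (eq_of_wbtw_of_dist_eq_of_dist_eq h heq hab.symm)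
    rw [heq]
    gcongr
  · calc
      dist c a ^ p / p + dist c a ^ (p - 1) * dist a b
        ≤ dist c a ^ p / p + dist c a ^ (p - 1) * (dist c x - dist c a + dist x b) := by gcongr
      _ = dist c a ^ p / p + dist c a ^ (p - 1) * (dist c x - dist c a) +
            dist c a ^ (p - 1) * dist x b := by ring
      _ < dist c x ^ p / p + dist c a ^ (p - 1) * dist x b := by
        gcongr
        exact rpow_div_add_rpow_sub_one_mul_sub_lt hp dist_nonneg dist_nonneg hne

end Torsor

/-- At `c = 0` the quotient by `‖c‖` is a junk value, but it only multiplies `c`. -/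
theorem stmt_18_general {p lam : ℝ} (hp : 1 < p) (hlam : 0 ≤ lam) {c : E}
    (hlc : lam ≤ ‖c‖ ^ (p - 1)) :
    ∀ x : E, x ≠ c - (lam ^ (1 / (p - 1)) / ‖c‖) • c →
      (1 / p) * ‖c - (c - (lam ^ (1 / (p - 1)) / ‖c‖) • c)‖ ^ p +
          lam * ‖c - (lam ^ (1 / (p - 1)) / ‖c‖) • c‖
        < (1 / p) * ‖c - x‖ ^ p + lam * ‖x‖ := by
  intro x hx
  have hp₁ : 0 < p - 1 := sub_pos.2 hp
  set r := lam ^ (1 / (p - 1)) with hr_def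
  have hr : 0 ≤ r := Real.rpow_nonneg hlam _
  have hr_pow : r ^ (p - 1) = lam := by
    rw [hr_def, one_div, Real.rpow_inv_rpow hlam hp₁.ne']
  have hrc : r ≤ ‖c‖ := by
    rwa [← hr_pow, Real.rpow_le_rpow_iff hr (norm_nonneg c) hp₁] at hlc
  have hnorm : ‖c - (c - (r / ‖c‖) • c)‖ = r := by
    rw [sub_sub_cancel, norm_div_norm_smul hr hrc]
  have hwbtw : Wbtw ℝ c (c - (r / ‖c‖) • c) 0 :=
    wbtw_sub_smul_zero c (by positivity) (div_le_one_of_le₀ hrc (norm_nonneg c))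
  simpa only [dist_eq_norm, sub_zero, hnorm, hr_pow, one_div_mul_eq_div] using
    dist_rpow_div_add_mul_dist_lt_of_wbtw hp hwbtw hx

end StrictConvexSpace

/-- `α ↦ (1/p)|c − α|^p + λ|α|` has unique global minimum at
`α = c − λ^{1/(p−1)}` when `0 < λ < c^{p−1}` and `p ≥ 2`. -/
theorem stmt_18 (p : ℝ) (hp : 2 ≤ p) (c lam : ℝ) (hc : 0 < c) (hlam : 0 < lam)
    (hlc : lam < c ^ (p - 1)) :
    ∀ α : ℝ, α ≠ c - lam ^ (1 / (p - 1)) →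
      (1 / p) * |c - (c - lam ^ (1 / (p - 1)))| ^ p + lam * |c - lam ^ (1 / (p - 1))|
        < (1 / p) * |c - α| ^ p + lam * |α| := by
  have hnorm : ‖c‖ = c := Real.norm_of_nonneg hc.le
  simpa only [hnorm, smul_eq_mul, div_mul_cancel₀ _ hc.ne', Real.norm_eq_abs] using
    stmt_18_general (one_lt_two.trans_le hp) hlam.le (c := c) (by rw [hnorm]; exact hlc.le)

end
end
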